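/- Let m ≥ 2 be an integer. For every real q with 0 < q < 1, ((2m−1)/2)·q^{(2m−3)²/(8(2m−1))}·P_m(q) = ((2m−1)/2)·Σ_{k=0}^{∞} χ_{4m−2}(k)·q^{k²/(8(2m−1))}, where the powers of q are real powers. -/

import Mathlib

open Finset

/-- The q-Pochhammer symbol `(x;q)_n = ∏_{j=0}^{n-1} (1 - x q^j)`. -/
noncomputable def qPoch (x q : ℂ) (n : ℕ) : ℂ := ∏ j ∈ Finset.range n, (1 - x * q ^ j)

/-- The Gaussian binomial coefficient `[n choose k]_q`. -/
noncomputable def qBinom (q : ℂ) (n k : ℕ) : ℂ :=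
  if k ≤ n then qPoch q q n / (qPoch q q (n - k) * qPoch q q k) else 0

/-- Extend a tuple `g : Fin k → ℕ` to `ℕ → ℕ` by zero. -/
def pad (k : ℕ) (g : Fin k → ℕ) : ℕ → ℕ := fun j => if h : j < k then g ⟨j, h⟩ else 0

/-- The general term of the multi-sum `P_m(q)`: here `n j` denotes `n_{j+1}` (0-based indexing),
so `n (m-2)` is `n_{m-1}` and `n 0` is `n_1`. -/
noncomputable def Pterm (m : ℕ) (q : ℂ) (n : ℕ → ℕ) : ℂ :=
  (-1) ^ (n (m - 2)) *
    q ^ (n (m - 2) * (n (m - 2) + 1) / 2 + ∑ j ∈ Finset.range (m - 2), ((n j) ^ 2 + n j)) /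
    qPoch (-q) q (n 0) *
    ∏ i ∈ Finset.range (m - 2), qBinom q (n (i + 1)) (n i)

/-- The multi-sum `P_m(q)`. -/
noncomputable def P (m : ℕ) (q : ℂ) : ℂ := ∑' n : Fin (m - 1) → ℕ, Pterm m q (pad (m - 1) n)

/-- The truncated multi-sum `Z_{m,N}(q)`. -/
noncomputable def Z (m N : ℕ) (q : ℂ) : ℂ :=
  ∑ n ∈ Fintype.piFinset (fun _ : Fin (m - 1) => Finset.range N), Pterm m q (pad (m - 1) n)

/-- The odd periodic function `χ_{4m-2}`. -/
def chiP (m : ℕ) (k : ℤ) : ℤ :=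
  if k % (4 * m - 2) = (2 * (m : ℤ) - 3) % (4 * m - 2) then 1
  else if k % (4 * m - 2) = (2 * (m : ℤ) + 1) % (4 * m - 2) then -1
  else 0

/-!
The sequences `α_r = (-1)^r q^{r²} (1 - q^{2r+1}) / (1 - q)` and `β_n = 1 / ((q;q)_n (-q;q)_n)` form
a Bailey pair relative to `q`. Up to factors `(q;q)_n`, each inner summation of the multi-sum `P_m`
is one step of the Bailey chain, so the `m - 2` inner summations replace `β` by its `(m-2)`-nd
iterate and multiply `α_r` by `q^{(m-2)(r²+r)}`. The outermost summation is the pairing with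
`δ_n = (-1)^n q^{n(n+1)/2} (q;q)_n`, whose conjugate sequence `γ` is given in closed form by the
`₁φ₁` summation `∑_j (-1)^j q^{j(j-1)/2} c^j (q;q)_{r+j} / ((q;q)_j (c;q)_{r+j+1}) = (q;q)_r`; the
latter follows by telescoping in `j` and induction on `r`. Thus `P_m(q) = ∑_r γ_r α_r` is a partial
theta series `∑_r q^{e(r)} (1 - q^{2r+1})`, and completing the square in its exponents turns them
into `k² / (8(2m-1))` with `k` running through the two residue classes supporting `χ_{4m-2}`.
-/

open Filter Topology

section QPochhammer

@[simp]
lemma qPoch_zero (x q : ℂ) : qPoch x q 0 = 1 := prod_range_zero _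

lemma qPoch_succ (x q : ℂ) (n : ℕ) : qPoch x q (n + 1) = qPoch x q n * (1 - x * q ^ n) :=
  prod_range_succ _ _

lemma qPoch_add (x q : ℂ) (m n : ℕ) :
    qPoch x q (m + n) = qPoch x q m * qPoch (x * q ^ m) q n := by
  simp only [qPoch, prod_range_add, pow_add, mul_assoc]

lemma qPoch_succ_left (x q : ℂ) (n : ℕ) : qPoch x q (n + 1) = (1 - x) * qPoch (x * q) q n := by
  simp [add_comm n 1, qPoch_add, qPoch_succ]

variable {x q : ℂ}

lemma one_sub_mul_pow_ne_zero_of_qPoch (h : ∀ n, qPoch x q n ≠ 0) (n : ℕ) :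
    1 - x * q ^ n ≠ 0 :=
  right_ne_zero_of_mul (qPoch_succ x q n ▸ h (n + 1))

lemma qPoch_mul_pow_ne_zero (h : ∀ n, qPoch x q n ≠ 0) (m n : ℕ) : qPoch (x * q ^ m) q n ≠ 0 :=
  right_ne_zero_of_mul (qPoch_add x q m n ▸ h (m + n))

lemma qPoch_mul_ne_zero (h : ∀ n, qPoch x q n ≠ 0) (n : ℕ) : qPoch (x * q) q n ≠ 0 := by
  simpa only [pow_one] using qPoch_mul_pow_ne_zero h 1 n

lemma qPoch_ne_zero (hx : ‖x‖ < 1) (hq : ‖q‖ ≤ 1) (n : ℕ) : qPoch x q n ≠ 0 := by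
  refine prod_ne_zero_iff.mpr fun j _ h => ?_
  have hlt : ‖x * q ^ j‖ < 1 := by
    rw [norm_mul, norm_pow]
    exact mul_lt_one_of_nonneg_of_lt_one_left (norm_nonneg x) hx (pow_le_one₀ (norm_nonneg q) hq)
  simp [← sub_eq_zero.mp h] at hlt

lemma summable_norm_neg_mul_pow (x : ℂ) (hq : ‖q‖ < 1) : Summable fun n : ℕ => ‖-(x * q ^ n)‖ := by
  simpa using (summable_geometric_of_lt_one (norm_nonneg q) hq).mul_left ‖x‖

lemma tendsto_qPoch (x : ℂ) (hq : ‖q‖ < 1) :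
    Tendsto (qPoch x q) atTop (𝓝 (∏' n : ℕ, (1 + -(x * q ^ n)))) := by
  have := (multipliable_one_add_of_summable (summable_norm_neg_mul_pow x hq)).hasProd
  simpa only [← sub_eq_add_neg] using! this.tendsto_prod_nat

lemma exists_norm_qPoch_le (x : ℂ) (hq : ‖q‖ < 1) : ∃ C, ∀ n, ‖qPoch x q n‖ ≤ C := by
  simpa using (Metric.isBounded_range_of_tendsto _ (tendsto_qPoch x hq)).exists_norm_le

lemma exists_norm_inv_qPoch_le (hq : ‖q‖ < 1) (h : ∀ n, qPoch x q n ≠ 0) :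
    ∃ C, ∀ n, ‖(qPoch x q n)⁻¹‖ ≤ C := by
  have hlim : ∏' n : ℕ, (1 + -(x * q ^ n)) ≠ 0 :=
    tprod_one_add_ne_zero_of_summable
      (fun n => by simpa only [← sub_eq_add_neg] using one_sub_mul_pow_ne_zero_of_qPoch h n)
      (summable_norm_neg_mul_pow x hq)
  simpa using
    (Metric.isBounded_range_of_tendsto _ ((tendsto_qPoch x hq).inv₀ hlim)).exists_norm_le

end QPochhammer

lemma summable_pow_choose_two_mul_pow {𝕜 : Type*} [NormedField 𝕜] [CompleteSpace 𝕜] {q : 𝕜}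
    (hq : ‖q‖ < 1) (c : 𝕜) :
    Summable fun n : ℕ => q ^ n.choose 2 * c ^ n := by
  have hlim : Tendsto (fun n : ℕ => ‖q ^ n * c‖) atTop (𝓝 0) := by
    simpa using ((tendsto_pow_atTop_nhds_zero_of_norm_lt_one hq).mul_const c).norm
  refine summable_of_ratio_norm_eventually_le (r := 1 / 2) (by norm_num) ?_
  filter_upwards [hlim.eventually_le_const one_half_pos] with n hn
  calc ‖q ^ (n + 1).choose 2 * c ^ (n + 1)‖ = ‖q ^ n * c‖ * ‖q ^ n.choose 2 * c ^ n‖ := by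
        rw [← norm_mul, Nat.choose_succ_succ' n 1, Nat.choose_one_right]
        ring_nf
    _ ≤ 1 / 2 * ‖q ^ n.choose 2 * c ^ n‖ := by gcongr

section BaileyPair

/-- `(α, β)` is a Bailey pair relative to `a`, that is,
`β_n = ∑_{r=0}^{n} α_r / ((q;q)_{n-r} (aq;q)_{n+r})`. To avoid subtraction the sum runs over the
pairs `(r, j)` with `r + j = n`. -/
def IsBaileyPair (a q : ℂ) (α β : ℕ → ℂ) : Prop :=
  ∀ n, β n = ∑ p ∈ antidiagonal n, α p.1 / (qPoch q q p.2 * qPoch (a * q) q (2 * p.1 + p.2))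

/-- The sequence `β'_n = ∑_{j=0}^{n} a^j q^{j²} β_j / (q;q)_{n-j}` which the Bailey chain attaches
to `β`; the sum runs over the pairs `(j, l)` with `j + l = n`. -/
noncomputable def baileyStep (a q : ℂ) (β : ℕ → ℂ) (n : ℕ) : ℂ :=
  ∑ p ∈ antidiagonal n, a ^ p.1 * q ^ p.1 ^ 2 * β p.1 / qPoch q q p.2

lemma sum_antidiagonal_fst_comm {M : Type*} [AddCommMonoid M] (f : ℕ → ℕ → ℕ → M) (n : ℕ) :
    ∑ p ∈ antidiagonal n, ∑ s ∈ antidiagonal p.1, f s.1 s.2 p.2 =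
      ∑ p ∈ antidiagonal n, ∑ s ∈ antidiagonal p.2, f p.1 s.1 s.2 := by
  rw [sum_sigma', sum_sigma']
  refine sum_nbij' (fun x => ⟨(x.2.1, x.2.2 + x.1.2), (x.2.2, x.1.2)⟩)
    (fun x => ⟨(x.1.1 + x.2.1, x.2.2), (x.1.1, x.2.1)⟩) ?_ ?_ ?_ ?_ ?_ <;>
    simp only [mem_sigma, HasAntidiagonal.mem_antidiagonal, Sigma.forall, Prod.forall] <;> grind

variable {a q : ℂ}

/-- The summand of the finite `q`-Chu–Vandermonde sum, for `n = j + l`. -/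
noncomputable def qVandermondeTerm (q x : ℂ) (j l : ℕ) : ℂ :=
  q ^ j ^ 2 * x ^ j / (qPoch q q j * qPoch q q l * qPoch (x * q) q j)

-- The `q`-Pascal rule `1 - q^{j+l} = q^j (1 - q^l) + (1 - q^j)` splits a summand into these two
-- contributions.
lemma qVandermondeTerm_pascal (hq : ∀ n, qPoch q q n ≠ 0) {x : ℂ}
    (hx : ∀ n, qPoch (x * q) q n ≠ 0) (j l : ℕ) :
    q ^ j * (1 - q ^ (l + 1)) * qVandermondeTerm q x j (l + 1) +
        (1 - q ^ (j + 1)) * qVandermondeTerm q x (j + 1) l =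
      (1 - x * q)⁻¹ * qVandermondeTerm q (x * q) j l := by
  have hj := one_sub_mul_pow_ne_zero_of_qPoch hq j
  have hl := one_sub_mul_pow_ne_zero_of_qPoch hq l
  have hxj := one_sub_mul_pow_ne_zero_of_qPoch hx j
  have hx0 : 1 - x * q ≠ 0 := by simpa using one_sub_mul_pow_ne_zero_of_qPoch hx 0
  have hleft : (1 - q ^ (l + 1)) * qVandermondeTerm q x j (l + 1) = qVandermondeTerm q x j l := by
    rw [qVandermondeTerm, qVandermondeTerm, qPoch_succ, pow_succ']
    field_simp
  have hmid : (1 - q ^ (j + 1)) * qVandermondeTerm q x (j + 1) l =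
      q ^ j * (x * q * q ^ j) * qVandermondeTerm q x j l / (1 - x * q * q ^ j) := by
    rw [qVandermondeTerm, qVandermondeTerm, qPoch_succ, qPoch_succ, pow_succ' q j]
    field_simp
    ring
  have hright : (1 - x * q)⁻¹ * qVandermondeTerm q (x * q) j l =
      q ^ j * qVandermondeTerm q x j l / (1 - x * q * q ^ j) := by
    have hxq : qPoch (x * q * q) q j = qPoch (x * q) q j * (1 - x * q * q ^ j) / (1 - x * q) := by
      rw [← qPoch_succ, qPoch_succ_left, mul_div_cancel_left₀ _ hx0]
    rw [qVandermondeTerm, qVandermondeTerm, hxq, mul_pow]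
    field_simp
  rw [mul_assoc, hleft, hmid, hright, eq_div_iff hxj, add_mul, div_mul_cancel₀ _ hxj]
  ring

lemma sum_qVandermondeTerm (hq : ∀ n, qPoch q q n ≠ 0) (n : ℕ) {x : ℂ}
    (hx : ∀ n, qPoch (x * q) q n ≠ 0) :
    ∑ p ∈ antidiagonal n, qVandermondeTerm q x p.1 p.2 =
      1 / (qPoch q q n * qPoch (x * q) q n) := by
  induction n generalizing x with
  | zero => simp [qVandermondeTerm]
  | succ n ih =>
    have hsplit : (1 - q * q ^ n) * ∑ p ∈ antidiagonal (n + 1), qVandermondeTerm q x p.1 p.2 =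
        ∑ p ∈ antidiagonal (n + 1), q ^ p.1 * (1 - q ^ p.2) * qVandermondeTerm q x p.1 p.2 +
          ∑ p ∈ antidiagonal (n + 1), (1 - q ^ p.1) * qVandermondeTerm q x p.1 p.2 := by
      rw [mul_sum, ← sum_add_distrib]
      refine sum_congr rfl fun p hp => ?_
      rw [← pow_succ', ← mem_antidiagonal.mp hp]
      ring
    have hrec : (1 - q * q ^ n) * ∑ p ∈ antidiagonal (n + 1), qVandermondeTerm q x p.1 p.2 =
        (1 - x * q)⁻¹ * (1 / (qPoch q q n * qPoch (x * q * q) q n)) := by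
      rw [hsplit, Nat.sum_antidiagonal_succ', Nat.sum_antidiagonal_succ,
        ← ih (qPoch_mul_ne_zero hx), mul_sum]
      simp [← sum_add_distrib, qVandermondeTerm_pascal hq hx]
    rw [← mul_right_inj' (one_sub_mul_pow_ne_zero_of_qPoch hq n), hrec, qPoch_succ,
      qPoch_succ_left (x * q)]
    have := one_sub_mul_pow_ne_zero_of_qPoch hq n
    field_simp

lemma sum_antidiagonal_baileyStep (hq : ∀ n, qPoch q q n ≠ 0) (ha : ∀ n, qPoch (a * q) q n ≠ 0)
    (r s : ℕ) :
    ∑ p ∈ antidiagonal s, a ^ (r + p.1) * q ^ (r + p.1) ^ 2 /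
        (qPoch q q p.1 * qPoch q q p.2 * qPoch (a * q) q (2 * r + p.1)) =
      a ^ r * q ^ r ^ 2 / (qPoch q q s * qPoch (a * q) q (2 * r + s)) := by
  have hshift (j : ℕ) : qPoch (a * q) q (2 * r + j) =
      qPoch (a * q) q (2 * r) * qPoch (a * q ^ (2 * r) * q) q j := by
    rw [qPoch_add, mul_right_comm]
  have hx (n : ℕ) : qPoch (a * q ^ (2 * r) * q) q n ≠ 0 :=
    right_ne_zero_of_mul (hshift n ▸ ha (2 * r + n))
  calc _ = ∑ p ∈ antidiagonal s, a ^ r * q ^ r ^ 2 / qPoch (a * q) q (2 * r) *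
        qVandermondeTerm q (a * q ^ (2 * r)) p.1 p.2 := by
        refine sum_congr rfl fun p _ => ?_
        rw [hshift, qVandermondeTerm]
        ring
    _ = _ := by
        rw [← mul_sum, sum_qVandermondeTerm hq s hx, hshift]
        ring

theorem IsBaileyPair.step {α β : ℕ → ℂ} (h : IsBaileyPair a q α β)
    (hq : ∀ n, qPoch q q n ≠ 0) (ha : ∀ n, qPoch (a * q) q n ≠ 0) :
    IsBaileyPair a q (fun r => a ^ r * q ^ r ^ 2 * α r) (baileyStep a q β) := by
  intro n
  calc baileyStep a q β n
      = ∑ p ∈ antidiagonal n, ∑ s ∈ antidiagonal p.1,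
          a ^ (s.1 + s.2) * q ^ (s.1 + s.2) ^ 2 * α s.1 /
            (qPoch q q s.2 * qPoch q q p.2 * qPoch (a * q) q (2 * s.1 + s.2)) := by
        refine sum_congr rfl fun p _ => ?_
        rw [h, mul_sum, sum_div]
        refine sum_congr rfl fun s hs => ?_
        rw [mem_antidiagonal.mp hs]
        ring
    _ = ∑ p ∈ antidiagonal n, ∑ s ∈ antidiagonal p.2,
          a ^ (p.1 + s.1) * q ^ (p.1 + s.1) ^ 2 * α p.1 /
            (qPoch q q s.1 * qPoch q q s.2 * qPoch (a * q) q (2 * p.1 + s.1)) :=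
        sum_antidiagonal_fst_comm (fun r j l => a ^ (r + j) * q ^ (r + j) ^ 2 * α r /
          (qPoch q q j * qPoch q q l * qPoch (a * q) q (2 * r + j))) n
    _ = ∑ p ∈ antidiagonal n, a ^ p.1 * q ^ p.1 ^ 2 * α p.1 /
          (qPoch q q p.2 * qPoch (a * q) q (2 * p.1 + p.2)) := by
        refine sum_congr rfl fun p _ => ?_
        rw [mul_div_right_comm, ← sum_antidiagonal_baileyStep hq ha, sum_mul]
        exact sum_congr rfl fun s _ => mul_div_right_comm _ _ _

theorem IsBaileyPair.iterate {α β : ℕ → ℂ} (h : IsBaileyPair a q α β)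
    (hq : ∀ n, qPoch q q n ≠ 0) (ha : ∀ n, qPoch (a * q) q n ≠ 0) (k : ℕ) :
    IsBaileyPair a q (fun r => (a ^ r * q ^ r ^ 2) ^ k * α r) ((baileyStep a q)^[k] β) := by
  induction k with
  | zero => simpa using h
  | succ k ih =>
    simpa only [Function.iterate_succ_apply', pow_succ', mul_assoc] using ih.step hq ha

end BaileyPair

section InitialPair

/-- The sequence `α_r = (-1)^r q^{r²} (1 - q^{2r+1}) / (1 - q)`, Slater's E(3), which forms a Bailey
pair relative to `q` with `β_n = 1 / (q²;q²)_n = 1 / ((q;q)_n (-q;q)_n)`. -/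
noncomputable def slaterAlpha (q : ℂ) (r : ℕ) : ℂ :=
  (-1) ^ r * q ^ r ^ 2 * (1 - q ^ (2 * r + 1)) / (1 - q)

/-- The summand `α_r / ((q;q)_j (q²;q)_{2r+j})` of the Bailey pair of `slaterAlpha`. -/
noncomputable def slaterTerm (q : ℂ) (r j : ℕ) : ℂ :=
  slaterAlpha q r / (qPoch q q j * qPoch (q * q) q (2 * r + j))

/-- The telescoping companion of `slaterTerm`, in the sense of creative telescoping. -/
noncomputable def slaterCert (q : ℂ) (r j : ℕ) : ℂ :=
  (-1) ^ r * q ^ (r ^ 2 + j) * (1 - q ^ (2 * r)) / (qPoch q q j * qPoch q q (2 * r + j))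

variable {q : ℂ}

lemma slaterTerm_eq (q : ℂ) (r j : ℕ) :
    slaterTerm q r j = (-1) ^ r * q ^ r ^ 2 * (1 - q ^ (2 * r + 1)) /
      (qPoch q q j * qPoch q q (2 * r + j + 1)) := by
  rw [slaterTerm, slaterAlpha, qPoch_succ_left, div_div]
  ring

lemma slaterTerm_telescope (hq : ∀ n, qPoch q q n ≠ 0) (r j : ℕ) :
    (1 - q ^ (2 * (r + j + 1))) * slaterTerm q r (j + 1) - slaterTerm q r j =
      slaterCert q r (j + 1) - slaterCert q (r + 1) j := by
  have hj := one_sub_mul_pow_ne_zero_of_qPoch hq j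
  have hr := one_sub_mul_pow_ne_zero_of_qPoch hq (2 * r + j + 1)
  set d := (-1) ^ r * q ^ r ^ 2 / (qPoch q q (j + 1) * qPoch q q (2 * r + j + 2)) with hd
  have hsucc : slaterTerm q r (j + 1) = d * (1 - q ^ (2 * r + 1)) := by
    rw [slaterTerm_eq]
    exact mul_div_right_comm _ _ _
  have hterm : slaterTerm q r j =
      d * (1 - q ^ (2 * r + 1)) * (1 - q * q ^ j) * (1 - q * q ^ (2 * r + j + 1)) := by
    rw [slaterTerm_eq, hd, qPoch_succ _ _ j, qPoch_succ _ _ (2 * r + j + 1)]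
    field_simp [hr]
  have hcert : slaterCert q r (j + 1) =
      d * q ^ (j + 1) * (1 - q ^ (2 * r)) * (1 - q * q ^ (2 * r + j + 1)) := by
    rw [slaterCert, hd, qPoch_succ _ _ (2 * r + j + 1), pow_add q (r ^ 2)]
    generalize 1 - q * q ^ (2 * r + j + 1) = y at *
    field_simp
    rfl
  have hcert' : slaterCert q (r + 1) j =
      -(d * q ^ (2 * r + j + 1) * (1 - q ^ (2 * r + 2)) * (1 - q * q ^ j)) := by
    rw [slaterCert, hd, qPoch_succ _ _ j, show 2 * (r + 1) + j = 2 * r + j + 2 by ring]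
    generalize 1 - q * q ^ j = y at *
    field_simp
    ring
  rw [hsucc, hterm, hcert, hcert']
  ring

lemma slaterTerm_zero (hq : ∀ n, qPoch q q n ≠ 0) (r : ℕ) :
    (1 - q ^ (2 * r)) * slaterTerm q r 0 = slaterCert q r 0 := by
  have := one_sub_mul_pow_ne_zero_of_qPoch hq (2 * r)
  rw [slaterTerm_eq, slaterCert, add_zero, add_zero, qPoch_succ, pow_succ' q (2 * r)]
  generalize 1 - q * q ^ (2 * r) = y at *
  field_simp

lemma sum_slaterTerm_succ (hq : ∀ n, qPoch q q n ≠ 0) (n : ℕ) :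
    (1 - q ^ (2 * (n + 1))) * ∑ p ∈ antidiagonal (n + 1), slaterTerm q p.1 p.2 =
      ∑ p ∈ antidiagonal n, slaterTerm q p.1 p.2 := by
  have htel : (1 - q ^ (2 * (n + 1))) * ∑ p ∈ antidiagonal n, slaterTerm q p.1 (p.2 + 1) -
      ∑ p ∈ antidiagonal n, slaterTerm q p.1 p.2 =
        ∑ p ∈ antidiagonal n, slaterCert q p.1 (p.2 + 1) -
          ∑ p ∈ antidiagonal n, slaterCert q (p.1 + 1) p.2 := by
    rw [mul_sum, ← sum_sub_distrib, ← sum_sub_distrib]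
    refine sum_congr rfl fun p hp => ?_
    rw [← slaterTerm_telescope hq, HasAntidiagonal.mem_antidiagonal.mp hp]
  have hcert : ∑ p ∈ antidiagonal n, slaterCert q p.1 (p.2 + 1) + slaterCert q (n + 1) 0 =
      ∑ p ∈ antidiagonal n, slaterCert q (p.1 + 1) p.2 := by
    rw [add_comm, ← Nat.sum_antidiagonal_succ' (f := fun p => slaterCert q p.1 p.2),
      Nat.sum_antidiagonal_succ]
    simp [slaterCert]
  rw [Nat.sum_antidiagonal_succ', mul_add, slaterTerm_zero hq]
  linear_combination htel + hcert

lemma isBaileyPair_slaterAlpha (hq : ∀ n, qPoch q q n ≠ 0) (hq' : ∀ n, qPoch (-q) q n ≠ 0) :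
    IsBaileyPair q q (slaterAlpha q) fun n => 1 / (qPoch q q n * qPoch (-q) q n) := by
  intro n
  change _ = ∑ p ∈ antidiagonal n, slaterTerm q p.1 p.2
  induction n with
  | zero =>
    have : 1 - q ≠ 0 := by simpa using one_sub_mul_pow_ne_zero_of_qPoch hq 0
    simp [slaterTerm, slaterAlpha, this]
  | succ n ih =>
    have hminus := one_sub_mul_pow_ne_zero_of_qPoch hq n
    have hplus := one_sub_mul_pow_ne_zero_of_qPoch hq' n
    have hfactor : 1 - q ^ (2 * (n + 1)) = (1 - q * q ^ n) * (1 - -q * q ^ n) := by ring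
    have hrec := sum_slaterTerm_succ hq n
    rw [← ih, hfactor] at hrec
    rw [← mul_right_inj' (mul_ne_zero hminus hplus), hrec]
    simp only [qPoch_succ]
    generalize 1 - -q * q ^ n = y at *
    field_simp

end InitialPair

section ConjugatePair

lemma hasSum_sub_succ {G : Type*} [AddCommGroup G] [TopologicalSpace G] [IsTopologicalAddGroup G]
    {f : ℕ → G} (hf : Summable f) : HasSum (fun n => f n - f (n + 1)) (f 0) := by
  simpa using hf.hasSum.sub ((hasSum_nat_add_iff' 1).mpr hf.hasSum)

lemma summable_mul_of_norm_le {ι 𝕜 : Type*} [RCLike 𝕜] {f g : ι → 𝕜} (hf : Summable f)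
    (hg : ∃ C, ∀ n, ‖g n‖ ≤ C) : Summable fun n => f n * g n := by
  obtain ⟨C, hC⟩ := hg
  exact .of_norm_bounded (hf.norm.mul_right C) fun n => norm_mul_le_of_le le_rfl (hC n)

/-- The summand `(-1)^j q^{j(j-1)/2} c^j (q;q)_{r+j} / ((q;q)_j (c;q)_{r+j+1})`, proportional in `j`
to that of the basic hypergeometric series `₁φ₁(q^{r+1}; c q^{r+1}; q, c)`. -/
noncomputable def onePhiOneTerm (c q : ℂ) (r j : ℕ) : ℂ :=
  q ^ j.choose 2 * (-c) ^ j * qPoch q q (r + j) / (qPoch q q j * qPoch c q (r + j + 1))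

variable {c q : ℂ}

lemma summable_onePhiOneTerm (hq : ‖q‖ < 1) (hc : ∀ n, qPoch c q n ≠ 0) (r : ℕ) :
    Summable (onePhiOneTerm c q r) := by
  obtain ⟨B, hB⟩ := exists_norm_qPoch_le q hq
  obtain ⟨C, hC⟩ := exists_norm_inv_qPoch_le hq (qPoch_ne_zero hq hq.le)
  obtain ⟨D, hD⟩ := exists_norm_inv_qPoch_le hq hc
  refine (summable_mul_of_norm_le (summable_mul_of_norm_le (summable_mul_of_norm_le
    (summable_pow_choose_two_mul_pow hq (-c)) ⟨B, fun j => hB (r + j)⟩) ⟨C, hC⟩)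
    ⟨D, fun j => hD (r + j + 1)⟩).congr fun j => ?_
  rw [onePhiOneTerm]
  ring

lemma onePhiOneTerm_zero_telescope (hq : ∀ n, qPoch q q n ≠ 0) (hc : ∀ n, qPoch c q n ≠ 0) (j : ℕ) :
    onePhiOneTerm c q 0 j = q ^ j.choose 2 * (-c) ^ j / qPoch c q j -
      q ^ (j + 1).choose 2 * (-c) ^ (j + 1) / qPoch c q (j + 1) := by
  have hj := hq j
  have hcj := one_sub_mul_pow_ne_zero_of_qPoch hc j
  rw [onePhiOneTerm, zero_add, qPoch_succ, Nat.choose_succ_succ' j 1, Nat.choose_one_right]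
  field_simp
  ring

lemma onePhiOneTerm_succ_telescope (hq : ∀ n, qPoch q q n ≠ 0) (hc : ∀ n, qPoch c q n ≠ 0)
    (r j : ℕ) :
    onePhiOneTerm c q (r + 1) j - (1 - q * q ^ r) * onePhiOneTerm c q r j =
      q ^ (r + 1) * (1 - q ^ j) * onePhiOneTerm c q r j -
        q ^ (r + 1) * (1 - q ^ (j + 1)) * onePhiOneTerm c q r (j + 1) := by
  have hj := one_sub_mul_pow_ne_zero_of_qPoch hq j
  have hcj := one_sub_mul_pow_ne_zero_of_qPoch hc (r + j + 1)
  set ρ := (1 - q * q ^ (r + j)) / (1 - c * q ^ (r + j + 1)) with hρ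
  have hr : onePhiOneTerm c q (r + 1) j = ρ * onePhiOneTerm c q r j := by
    rw [onePhiOneTerm, onePhiOneTerm, hρ, add_right_comm r 1 j, qPoch_succ q, qPoch_succ c,
      div_mul_div_comm]
    congr 1 <;> ring
  have hsucc : (1 - q ^ (j + 1)) * onePhiOneTerm c q r (j + 1) =
      -(c * q ^ j * ρ) * onePhiOneTerm c q r j := by
    rw [onePhiOneTerm, onePhiOneTerm, hρ, ← add_assoc r j 1, qPoch_succ q, qPoch_succ q q j,
      qPoch_succ c, Nat.choose_succ_succ' j 1, Nat.choose_one_right, pow_succ' q j]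
    field_simp
    ring
  have hmul : ρ * (1 - c * q ^ (r + j + 1)) = 1 - q * q ^ (r + j) := div_mul_cancel₀ _ hcj
  rw [mul_assoc _ (1 - q ^ (j + 1)), hsucc, hr]
  linear_combination onePhiOneTerm c q r j * hmul

lemma hasSum_onePhiOneTerm (hq : ‖q‖ < 1) (hc : ∀ n, qPoch c q n ≠ 0) (r : ℕ) :
    HasSum (onePhiOneTerm c q r) (qPoch q q r) := by
  have hqn := qPoch_ne_zero hq hq.le
  induction r with
  | zero =>
    have hsum : Summable fun j : ℕ => q ^ j.choose 2 * (-c) ^ j / qPoch c q j :=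
      summable_mul_of_norm_le (summable_pow_choose_two_mul_pow hq (-c))
        (exists_norm_inv_qPoch_le hq hc)
    simpa [← onePhiOneTerm_zero_telescope hqn hc] using hasSum_sub_succ hsum
  | succ r ih =>
    have hbdd (j : ℕ) : ‖q ^ (r + 1) * (1 - q ^ j)‖ ≤ 1 * (1 + 1) := by
      refine norm_mul_le_of_le ?_ (norm_sub_le_of_le norm_one.le ?_) <;>
        exact (norm_pow q _).trans_le (pow_le_one₀ (norm_nonneg q) hq.le)
    have hsum : Summable fun j => q ^ (r + 1) * (1 - q ^ j) * onePhiOneTerm c q r j := by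
      simpa only [mul_comm] using!
        summable_mul_of_norm_le (summable_onePhiOneTerm hq hc r) ⟨_, hbdd⟩
    have htel := hasSum_sub_succ hsum
    simp only [← onePhiOneTerm_succ_telescope hqn hc, pow_zero, sub_self, mul_zero,
      zero_mul] at htel
    simpa [qPoch_succ, mul_comm] using htel.add (ih.mul_left (1 - q * q ^ r))

/-- The sequence `δ_n = (-1)^n q^{n(n-1)/2} a^n (q;q)_n`, against which a Bailey pair relative to
`a` is summed. -/
noncomputable def conjugateDelta (a q : ℂ) (n : ℕ) : ℂ :=
  q ^ n.choose 2 * (-a) ^ n * qPoch q q n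

/-- The sequence `γ_r = ∑_{n ≥ r} δ_n / ((q;q)_{n-r} (aq;q)_{n+r})` that forms a conjugate Bailey
pair with `conjugateDelta`, in closed form. -/
noncomputable def conjugateGamma (a q : ℂ) (r : ℕ) : ℂ :=
  q ^ r.choose 2 * (-a) ^ r * (1 - a) * qPoch q q r / qPoch a q r

variable {a : ℂ}

lemma choose_two_add (m n : ℕ) : (m + n).choose 2 = m.choose 2 + n.choose 2 + m * n := by
  induction n with
  | zero => simp
  | succ n ih =>
    rw [← add_assoc, Nat.choose_succ_succ' (m + n) 1, Nat.choose_succ_succ' n 1, ih,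
      Nat.choose_one_right, Nat.choose_one_right]
    ring

lemma conjugateDelta_div (ha : ∀ n, qPoch a q n ≠ 0) (r j : ℕ) :
    conjugateDelta a q (r + j) / (qPoch q q j * qPoch (a * q) q (2 * r + j)) =
      q ^ r.choose 2 * (-a) ^ r * (1 - a) / qPoch a q r * onePhiOneTerm (a * q ^ r) q r j := by
  have ha1 : 1 - a ≠ 0 := by simpa using one_sub_mul_pow_ne_zero_of_qPoch ha 0
  have hprod : qPoch a q r * qPoch (a * q ^ r) q (r + j + 1) =
      (1 - a) * qPoch (a * q) q (2 * r + j) := by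
    rw [← qPoch_add, ← qPoch_succ_left, two_mul, add_assoc, add_assoc, add_assoc]
  calc _ = q ^ r.choose 2 * (-a) ^ r * (1 - a) *
        (q ^ j.choose 2 * (-(a * q ^ r)) ^ j * qPoch q q (r + j)) /
          (qPoch q q j * ((1 - a) * qPoch (a * q) q (2 * r + j))) := by
        rw [conjugateDelta, choose_two_add]
        field_simp
        ring
    _ = _ := by
        rw [← hprod, onePhiOneTerm]
        ring

lemma hasSum_conjugateDelta (hq : ‖q‖ < 1) (ha : ∀ n, qPoch a q n ≠ 0) (r : ℕ) :
    HasSum (fun j => conjugateDelta a q (r + j) / (qPoch q q j * qPoch (a * q) q (2 * r + j)))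
      (conjugateGamma a q r) := by
  simp only [conjugateDelta_div ha, conjugateGamma, mul_div_right_comm _ (qPoch q q r)]
  exact (hasSum_onePhiOneTerm hq (qPoch_mul_pow_ne_zero ha r) r).mul_left _

lemma tsum_sum_antidiagonal {E : Type*} [NormedAddCommGroup E] [CompleteSpace E] {f : ℕ × ℕ → E}
    (hf : Summable f) :
    ∑' n, ∑ p ∈ antidiagonal n, f p = ∑' r, ∑' j, f (r, j) := by
  have hσ := HasAntidiagonal.sigmaAntidiagonalEquivProd.summable_iff.mpr hf
  rw [← hf.tsum_prod, ← HasAntidiagonal.sigmaAntidiagonalEquivProd.tsum_eq f]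
  refine (hσ.tsum_sigma.trans <| tsum_congr fun n => ?_).symm
  exact tsum_subtype _ _

lemma summable_baileyTransform {α : ℕ → ℂ} (hq : ‖q‖ < 1) (ha : ∀ n, qPoch a q n ≠ 0)
    (hα : Summable fun r => q ^ r.choose 2 * (-a) ^ r * α r) :
    Summable fun p : ℕ × ℕ => α p.1 *
      (conjugateDelta a q (p.1 + p.2) / (qPoch q q p.2 * qPoch (a * q) q (2 * p.1 + p.2))) := by
  obtain ⟨B, hB⟩ := exists_norm_qPoch_le q hq
  obtain ⟨C, hC⟩ := exists_norm_inv_qPoch_le hq (qPoch_ne_zero hq hq.le)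
  obtain ⟨D, hD⟩ := exists_norm_inv_qPoch_le hq (qPoch_mul_ne_zero ha)
  have hprod := summable_mul_of_summable_norm hα.norm
    (summable_pow_choose_two_mul_pow hq (-a)).norm
  refine .of_norm_bounded (hprod.norm.mul_right (1 * B * C * D)) fun p => ?_
  have hpow : ‖q ^ (p.1 * p.2)‖ ≤ 1 :=
    (norm_pow q _).trans_le (pow_le_one₀ (norm_nonneg q) hq.le)
  refine le_of_eq_of_le (congrArg norm ?_) (norm_mul_le_of_le le_rfl
    (norm_mul_le_of_le (norm_mul_le_of_le (norm_mul_le_of_le hpow (hB (p.1 + p.2))) (hC p.2))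
      (hD (2 * p.1 + p.2))))
  rw [conjugateDelta, choose_two_add]
  ring

theorem IsBaileyPair.tsum_conjugateDelta_mul {α β : ℕ → ℂ} (h : IsBaileyPair a q α β)
    (hq : ‖q‖ < 1) (ha : ∀ n, qPoch a q n ≠ 0)
    (hα : Summable fun r => q ^ r.choose 2 * (-a) ^ r * α r) :
    ∑' n, conjugateDelta a q n * β n = ∑' r, conjugateGamma a q r * α r := by
  calc _ = ∑' n, ∑ p ∈ antidiagonal n, α p.1 * (conjugateDelta a q (p.1 + p.2) /
        (qPoch q q p.2 * qPoch (a * q) q (2 * p.1 + p.2))) := by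
        refine tsum_congr fun n => ?_
        rw [h n, mul_sum]
        refine sum_congr rfl fun p hp => ?_
        rw [HasAntidiagonal.mem_antidiagonal.mp hp]
        ring
    _ = ∑' r, ∑' j, α r * (conjugateDelta a q (r + j) /
        (qPoch q q j * qPoch (a * q) q (2 * r + j))) :=
        tsum_sum_antidiagonal (summable_baileyTransform hq ha hα)
    _ = _ := by
        refine tsum_congr fun r => ?_
        rw [tsum_mul_left, (hasSum_conjugateDelta hq ha r).tsum_eq, mul_comm]

end ConjugatePair

section IteratedKernel

variable {ι 𝕜 : Type*} [RCLike 𝕜]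

/-- The integral operator `φ ↦ (n ↦ ∑_j K(n, j) φ(j))` of a kernel `K` over a discrete type. -/
noncomputable def kernelOp (K : ι → ι → 𝕜) (φ : ι → 𝕜) (n : ι) : 𝕜 := ∑' j, K n j * φ j

/-- The weight `w(g_k) K(g_k, g_{k-1}) ⋯ K(g_1, g_0) φ(g_0)` of the path `g`, whose sum over all
paths is the pairing of `w` with the `k`-fold iterate of `kernelOp K` at `φ`. -/
def pathWeight (K : ι → ι → 𝕜) (w φ : ι → 𝕜) {k : ℕ} (g : Fin (k + 1) → ι) : 𝕜 :=
  w (g (Fin.last k)) * φ (g 0) * ∏ i : Fin k, K (g i.succ) (g i.castSucc)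

variable {K : ι → ι → 𝕜} {w φ : ι → 𝕜}

lemma pathWeight_cons {k : ℕ} (x : ι) (g : Fin (k + 1) → ι) :
    pathWeight K w φ (Fin.cons x g : Fin (k + 2) → ι) =
      pathWeight K w (fun n => K n x * φ x) g := by
  simp only [pathWeight, Fin.prod_univ_succ, ← Fin.succ_last, ← Fin.succ_castSucc, Fin.cons_succ,
    Fin.castSucc_zero, Fin.cons_zero]
  ring

theorem tsum_pathWeight {k : ℕ}
    (h : Summable fun g : Fin (k + 1) → ι => pathWeight K w φ g) :
    ∑' g : Fin (k + 1) → ι, pathWeight K w φ g = ∑' n, w n * (kernelOp K)^[k] φ n := by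
  induction k generalizing φ with
  | zero =>
    rw [← (Equiv.funUnique (Fin 1) ι).symm.tsum_eq]
    simp [pathWeight]
  | succ k ih =>
    let e := (Equiv.prodComm _ _).trans (Fin.consEquiv fun _ : Fin (k + 2) => ι)
    have hcons (p : (Fin (k + 1) → ι) × ι) : pathWeight K w φ (e p) =
        pathWeight K w (fun n => K n p.2 * φ p.2) p.1 := pathWeight_cons p.2 p.1
    have he := (e.summable_iff.mpr h).congr hcons
    have hinner (g : Fin (k + 1) → ι) : ∑' x, pathWeight K w (fun n => K n x * φ x) g =
        pathWeight K w (kernelOp K φ) g := by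
      simp only [pathWeight, kernelOp, tsum_mul_left, tsum_mul_right]
    calc _ = ∑' p : (Fin (k + 1) → ι) × ι, pathWeight K w (fun n => K n p.2 * φ p.2) p.1 := by
          rw [← e.tsum_eq]
          exact tsum_congr hcons
      _ = ∑' g, pathWeight K w (kernelOp K φ) g := by simp only [he.tsum_prod, hinner]
      _ = _ := ih (by simpa only [hinner] using he.prod)

lemma summable_pathWeight {v : ι → ℝ} (hv : Summable v) (hK : ∀ n j, ‖K n j‖ ≤ v j)
    (hw : Summable w) (hφ : ∃ C, ∀ n, ‖φ n‖ ≤ C) (k : ℕ) :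
    Summable fun g : Fin (k + 1) → ι => pathWeight K w φ g := by
  induction k generalizing φ with
  | zero =>
    rw [← (Equiv.funUnique (Fin 1) ι).symm.summable_iff]
    simpa [Function.comp_def, pathWeight] using summable_mul_of_norm_le hw hφ
  | succ k ih =>
    obtain ⟨C, hC⟩ := hφ
    have hone : Summable fun g : Fin (k + 1) → ι => pathWeight K w (fun _ => 1) g :=
      ih ⟨1, fun _ => norm_one.le⟩
    have hprod := (hv.mul_right C).norm.mul_of_nonneg hone.norm (fun _ => norm_nonneg _)
      fun _ => norm_nonneg _
    rw [← (Fin.consEquiv fun _ : Fin (k + 2) => ι).summable_iff]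
    refine .of_norm_bounded hprod fun p => ?_
    have hcons : pathWeight K w φ (Fin.consEquiv (fun _ : Fin (k + 2) => ι) p) =
        K (p.2 0) p.1 * φ p.1 * pathWeight K w (fun _ => 1) p.2 := by
      refine (pathWeight_cons p.1 p.2).trans ?_
      rw [pathWeight, pathWeight]
      ring
    rw [Function.comp_apply, hcons]
    exact norm_mul_le_of_le ((norm_mul_le_of_le (hK _ _) (hC _)).trans (Real.le_norm_self _)) le_rfl

end IteratedKernel

section MultiSum

/-- The kernel `K(n, j) = a^j q^{j²} [n choose j]_q`, which is `baileyStep` up to conjugation by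
`(q;q)_n`. -/
noncomputable def gaussianKernel (a q : ℂ) (n j : ℕ) : ℂ := a ^ j * q ^ j ^ 2 * qBinom q n j

variable {a q : ℂ}

lemma kernelOp_gaussianKernel (hq : ∀ n, qPoch q q n ≠ 0) (β : ℕ → ℂ) :
    kernelOp (gaussianKernel a q) (fun j => qPoch q q j * β j) =
      fun n => qPoch q q n * baileyStep a q β n := by
  ext n
  have hsupp (j : ℕ) (hj : j ∉ range (n + 1)) :
      gaussianKernel a q n j * (qPoch q q j * β j) = 0 := by
    rw [gaussianKernel, qBinom, if_neg (by simpa using hj), mul_zero, zero_mul]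
  rw [kernelOp, tsum_eq_sum hsupp, baileyStep, Nat.sum_antidiagonal_eq_sum_range_succ_mk, mul_sum]
  refine sum_congr rfl fun j hj => ?_
  rw [gaussianKernel, qBinom, if_pos (mem_range_succ_iff.mp hj)]
  have := hq j
  field_simp

lemma kernelOp_gaussianKernel_iterate (hq : ∀ n, qPoch q q n ≠ 0) (β : ℕ → ℂ) (k : ℕ) :
    (kernelOp (gaussianKernel a q))^[k] (fun j => qPoch q q j * β j) =
      fun n => qPoch q q n * (baileyStep a q)^[k] β n :=
  ((show Function.Semiconj (fun β n => qPoch q q n * β n) (baileyStep a q)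
    (kernelOp (gaussianKernel a q)) from fun β => (kernelOp_gaussianKernel hq β).symm).iterate_right
      k β).symm

lemma sq_eq_two_mul_choose_two_add (n : ℕ) : n ^ 2 = 2 * n.choose 2 + n := by
  induction n with
  | zero => rfl
  | succ n ih =>
    rw [Nat.choose_succ_succ' n 1, Nat.choose_one_right]
    linarith

lemma exists_norm_qBinom_le (hq : ‖q‖ < 1) : ∃ C, ∀ n j, ‖qBinom q n j‖ ≤ C := by
  obtain ⟨B, hB⟩ := exists_norm_qPoch_le q hq
  obtain ⟨C, hC⟩ := exists_norm_inv_qPoch_le hq (qPoch_ne_zero hq hq.le)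
  have hC0 : 0 ≤ C := (norm_nonneg _).trans (hC 0)
  refine ⟨B * (C * C), fun n j => ?_⟩
  rw [qBinom]
  split_ifs
  · rw [div_eq_mul_inv, mul_inv]
    exact norm_mul_le_of_le (hB _) (norm_mul_le_of_le (hC _) (hC _))
  · have hB0 : 0 ≤ B := (norm_nonneg _).trans (hB 0)
    simpa using mul_nonneg hB0 (mul_nonneg hC0 hC0)

lemma exists_summable_norm_gaussianKernel_le (a : ℂ) (hq : ‖q‖ < 1) :
    ∃ v : ℕ → ℝ, Summable v ∧ ∀ n j, ‖gaussianKernel a q n j‖ ≤ v j := by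
  obtain ⟨C, hC⟩ := exists_norm_qBinom_le hq
  have hq2 : ‖q ^ 2‖ < 1 := by
    rw [norm_pow]
    exact pow_lt_one₀ (norm_nonneg q) hq two_ne_zero
  have hsum : Summable fun j : ℕ => a ^ j * q ^ j ^ 2 := by
    refine (summable_pow_choose_two_mul_pow hq2 (a * q)).congr fun j => ?_
    rw [sq_eq_two_mul_choose_two_add j]
    ring
  exact ⟨_, hsum.norm.mul_right C, fun n j => norm_mul_le_of_le le_rfl (hC n j)⟩

lemma pad_val {n : ℕ} (g : Fin n → ℕ) (i : Fin n) : pad n g i = g i := dif_pos i.isLt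

lemma Pterm_add_two_pad (k : ℕ) (q : ℂ) (g : Fin (k + 1) → ℕ) :
    Pterm (k + 2) q (pad (k + 1) g) =
      pathWeight (gaussianKernel q q) (fun n => q ^ n.choose 2 * (-q) ^ n)
        (fun n => 1 / qPoch (-q) q n) g := by
  have hlast : pad (k + 1) g k = g (Fin.last k) := pad_val g (Fin.last k)
  have hzero : pad (k + 1) g 0 = g 0 := pad_val g 0
  have hcast (i : Fin k) : pad (k + 1) g i = g i.castSucc := pad_val g i.castSucc
  have hsucc (i : Fin k) : pad (k + 1) g (i + 1) = g i.succ := pad_val g i.succ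
  have htri (n : ℕ) : n * (n + 1) / 2 = n.choose 2 + n := by
    rw [mul_comm, Nat.choose_two_right]
    exact Nat.triangle_succ n
  simp only [Pterm, pathWeight, gaussianKernel, Nat.add_sub_cancel, sum_range, prod_range, htri,
    hlast, hzero, hcast, hsucc, prod_mul_distrib, pow_add, ← prod_pow_eq_pow_sum, neg_pow q]
  ring

/-- The exponent `e(r)` of the partial theta series for `P_{k+2}`, characterised by
`((4k+6) r + 2k + 1)² = (2k + 1)² + 8 (2k + 3) e(r)`. -/
def thetaExponent (k r : ℕ) : ℕ := r.choose 2 + r + k * (r + r ^ 2) + r ^ 2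

lemma summable_pow_thetaExponent_add (k : ℕ) (hq : ‖q‖ < 1) (c : ℕ → ℕ) :
    Summable fun r => q ^ (thetaExponent k r + c r) := by
  refine .of_norm_bounded (summable_geometric_of_lt_one (norm_nonneg q) hq) fun r => ?_
  rw [norm_pow]
  refine pow_le_pow_of_le_one (norm_nonneg q) hq.le ?_
  rw [thetaExponent, add_assoc, add_assoc, add_assoc, add_left_comm]
  exact Nat.le_add_right _ _

lemma summable_pow_thetaExponent (k : ℕ) (hq : ‖q‖ < 1) :
    Summable fun r => q ^ thetaExponent k r :=
  summable_pow_thetaExponent_add k hq 0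

lemma pow_mul_slaterAlpha (k r : ℕ) :
    q ^ r.choose 2 * (-q) ^ r * ((q ^ r * q ^ r ^ 2) ^ k * slaterAlpha q r) =
      (q ^ thetaExponent k r - q ^ (thetaExponent k r + (2 * r + 1))) / (1 - q) := by
  have hsign : (-q) ^ r * (-1) ^ r = q ^ r := by rw [← mul_pow, mul_neg_one, neg_neg]
  rw [slaterAlpha, thetaExponent]
  linear_combination
    q ^ r.choose 2 * (q ^ r * q ^ r ^ 2) ^ k * q ^ r ^ 2 * (1 - q ^ (2 * r + 1)) / (1 - q) * hsign

theorem P_add_two_eq_tsum (k : ℕ) (hq : ‖q‖ < 1) :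
    P (k + 2) q =
      ∑' r, (q ^ thetaExponent k r - q ^ (thetaExponent k r + (2 * r + 1))) := by
  have hqn := qPoch_ne_zero hq hq.le
  have hnegq := qPoch_ne_zero (x := -q) (by rwa [norm_neg]) hq.le
  obtain ⟨v, hv, hK⟩ := exists_summable_norm_gaussianKernel_le q hq
  have hw := summable_pow_choose_two_mul_pow hq (-q)
  have hφ : ∃ C, ∀ n, ‖1 / qPoch (-q) q n‖ ≤ C := by
    simpa only [one_div] using exists_norm_inv_qPoch_le hq hnegq
  have hpair := (isBaileyPair_slaterAlpha hqn hnegq).iterate hqn (qPoch_mul_ne_zero hqn) k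
  set β : ℕ → ℂ := fun n => 1 / (qPoch q q n * qPoch (-q) q n)
  have hβ : (fun n => 1 / qPoch (-q) q n) = fun n => qPoch q q n * β n := by
    ext n
    have := hqn n
    simp only [β]
    field_simp
  calc P (k + 2) q
      = ∑' g : Fin (k + 1) → ℕ, pathWeight (gaussianKernel q q)
          (fun n => q ^ n.choose 2 * (-q) ^ n) (fun n => 1 / qPoch (-q) q n) g :=
        tsum_congr (Pterm_add_two_pad k q)
    _ = ∑' n, conjugateDelta q q n * (baileyStep q q)^[k] β n := by
        rw [tsum_pathWeight (summable_pathWeight hv hK hw hφ k), hβ,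
          kernelOp_gaussianKernel_iterate hqn]
        simp only [conjugateDelta, mul_assoc]
    _ = ∑' r, conjugateGamma q q r * ((q ^ r * q ^ r ^ 2) ^ k * slaterAlpha q r) := by
        refine hpair.tsum_conjugateDelta_mul hq hqn ?_
        simpa only [pow_mul_slaterAlpha] using ((summable_pow_thetaExponent k hq).sub
          (summable_pow_thetaExponent_add k hq _)).div_const _
    _ = _ := by
        refine tsum_congr fun r => ?_
        have h1 : 1 - q ≠ 0 := by simpa using one_sub_mul_pow_ne_zero_of_qPoch hqn 0
        rw [conjugateGamma, mul_div_cancel_right₀ _ (hqn r), mul_right_comm, pow_mul_slaterAlpha,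
          div_mul_cancel₀ _ h1]

end MultiSum

section CharacterSum

lemma hasSum_ite_mod_eq {M : Type*} [AddCommMonoid M] [TopologicalSpace M] {f : ℕ → M} {s : M}
    {N b : ℕ} (hb : b < N) (h : HasSum (fun r => f (N * r + b)) s) :
    HasSum (fun j => if j % N = b then f j else 0) s := by
  have hinj : Function.Injective fun r => N * r + b := fun r r' hrr' =>
    Nat.eq_of_mul_eq_mul_left (Nat.zero_lt_of_lt hb) (Nat.add_right_cancel hrr')
  rw [← hinj.hasSum_iff]
  · simpa [Function.comp_def, Nat.mul_add_mod, Nat.mod_eq_of_lt hb] using h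
  · intro j hj
    refine if_neg fun hjb => hj ⟨j / N, ?_⟩
    simp only [← hjb, Nat.div_add_mod]

lemma chiP_add_two_natCast (k j : ℕ) : chiP (k + 2) j =
    (if j % (4 * k + 6) = 2 * k + 1 then 1 else 0) -
      (if j % (4 * k + 6) = 2 * k + 5 then 1 else 0) := by
  have hmod : (j : ℤ) % (4 * (k + 2 : ℕ) - 2) = (j % (4 * k + 6) : ℕ) := by
    push_cast
    ring_nf
  have hpos : (2 * (k + 2 : ℕ) - 3 : ℤ) % (4 * (k + 2 : ℕ) - 2) = (2 * k + 1 : ℕ) := by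
    rw [Int.emod_eq_of_lt] <;> push_cast <;> linarith
  have hneg : (2 * (k + 2 : ℕ) + 1 : ℤ) % (4 * (k + 2 : ℕ) - 2) = (2 * k + 5 : ℕ) := by
    rw [Int.emod_eq_of_lt] <;> push_cast <;> linarith
  simp only [chiP, hmod, hpos, hneg, Nat.cast_inj]
  split_ifs <;> omega

lemma cpow_add_natCast {q a : ℂ} {n : ℕ} (ha : a ≠ 0) (han : a + n ≠ 0) :
    q ^ (a + n) = q ^ a * q ^ n := by
  rcases eq_or_ne q 0 with rfl | hq
  · rw [Complex.zero_cpow ha, Complex.zero_cpow han, zero_mul]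
  · rw [Complex.cpow_add _ _ hq, Complex.cpow_natCast]

lemma sq_pos_residue_eq (k r : ℕ) : ((4 * k + 6) * r + (2 * k + 1)) ^ 2 =
    (2 * k + 1) ^ 2 + 8 * (2 * k + 3) * thetaExponent k r := by
  have := sq_eq_two_mul_choose_two_add r
  rw [thetaExponent]
  linear_combination 4 * (2 * k + 3) * this

lemma sq_neg_residue_eq (k r : ℕ) : ((4 * k + 6) * r + (2 * k + 5)) ^ 2 =
    (2 * k + 1) ^ 2 + 8 * (2 * k + 3) * (thetaExponent k r + (2 * r + 1)) := by
  have := sq_pos_residue_eq k r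
  linear_combination this

lemma cpow_sq_div (q : ℂ) {k n e : ℕ} (h : n ^ 2 = (2 * k + 1) ^ 2 + 8 * (2 * k + 3) * e) :
    q ^ ((n : ℂ) ^ 2 / (8 * (2 * k + 3))) =
      q ^ ((2 * (k : ℂ) + 1) ^ 2 / (8 * (2 * k + 3))) * q ^ e := by
  have hk : 2 * (k : ℂ) + 3 ≠ 0 := by norm_cast
  have hk' : 2 * (k : ℂ) + 1 ≠ 0 := by norm_cast
  have hn : (n : ℂ) ≠ 0 := by
    have hpos : 0 < n ^ 2 := by
      rw [h]
      positivity
    exact Nat.cast_ne_zero.mpr (pow_ne_zero_iff two_ne_zero |>.mp hpos.ne')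
  have hsq : (n : ℂ) ^ 2 / (8 * (2 * k + 3)) =
      (2 * (k : ℂ) + 1) ^ 2 / (8 * (2 * k + 3)) + e := by
    rw [eq_comm, div_add' _ _ _ (by simpa using hk)]
    congr 1
    norm_cast
    rw [h, mul_comm e]
  rw [hsq, cpow_add_natCast]
  · exact div_ne_zero (pow_ne_zero 2 hk') (by simpa using hk)
  · exact hsq ▸ div_ne_zero (pow_ne_zero 2 hn) (by simpa using hk)

theorem tsum_chiP_add_two_mul_cpow (k : ℕ) {q : ℂ} (hq : ‖q‖ < 1) :
    ∑' j : ℕ, (chiP (k + 2) j : ℂ) * q ^ ((j : ℂ) ^ 2 / (8 * (2 * k + 3))) =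
      q ^ ((2 * (k : ℂ) + 1) ^ 2 / (8 * (2 * k + 3))) *
        ∑' r, (q ^ thetaExponent k r - q ^ (thetaExponent k r + (2 * r + 1))) := by
  have hpos := summable_pow_thetaExponent k hq
  have hneg := summable_pow_thetaExponent_add k hq fun r => 2 * r + 1
  set f : ℕ → ℂ := fun j => q ^ ((j : ℂ) ^ 2 / (8 * (2 * k + 3)))
  set Q := q ^ ((2 * (k : ℂ) + 1) ^ 2 / (8 * (2 * k + 3)))
  have hpos' : HasSum (fun j => if j % (4 * k + 6) = 2 * k + 1 then f j else 0)
      (Q * ∑' r, q ^ thetaExponent k r) := by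
    refine hasSum_ite_mod_eq (by lia) ?_
    simpa only [f, Q, cpow_sq_div q (sq_pos_residue_eq k _)] using hpos.hasSum.mul_left Q
  have hneg' : HasSum (fun j => if j % (4 * k + 6) = 2 * k + 5 then f j else 0)
      (Q * ∑' r, q ^ (thetaExponent k r + (2 * r + 1))) := by
    refine hasSum_ite_mod_eq (by lia) ?_
    simpa only [f, Q, cpow_sq_div q (sq_neg_residue_eq k _)] using hneg.hasSum.mul_left Q
  rw [hpos.tsum_sub hneg, mul_sub, ← (hpos'.sub hneg').tsum_eq]
  refine tsum_congr fun j => ?_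
  simp [f, chiP_add_two_natCast, sub_mul]

end CharacterSum

theorem stmt7_general (m : ℕ) (hm : 2 ≤ m) {q : ℂ} (hq : ‖q‖ < 1) :
    q ^ ((2 * (m : ℂ) - 3) ^ 2 / (8 * (2 * m - 1))) * P m q =
      ∑' k : ℕ, (chiP m k : ℂ) * q ^ ((k : ℂ) ^ 2 / (8 * (2 * (m : ℂ) - 1))) := by
  obtain ⟨k, rfl⟩ := Nat.exists_eq_add_of_le' hm
  have h1 : 2 * ((k + 2 : ℕ) : ℂ) - 1 = 2 * k + 3 := by push_cast; ring
  have h3 : 2 * ((k + 2 : ℕ) : ℂ) - 3 = 2 * k + 1 := by push_cast; ring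
  rw [h1, h3, P_add_two_eq_tsum k hq, tsum_chiP_add_two_mul_cpow k hq]

theorem stmt7 (m : ℕ) (hm : 2 ≤ m) (q : ℝ) (hq0 : 0 < q) (hq1 : q < 1) :
    ((2 * (m : ℂ) - 1) / 2) *
        ((q ^ ((2 * (m : ℝ) - 3) ^ 2 / (8 * (2 * m - 1))) : ℝ) : ℂ) * P m (q : ℂ) =
      ((2 * (m : ℂ) - 1) / 2) *
        ∑' k : ℕ, (chiP m k : ℂ) * ((q ^ ((k : ℝ) ^ 2 / (8 * (2 * (m : ℝ) - 1))) : ℝ) : ℂ) := by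
  simpa [mul_assoc, Complex.ofReal_cpow hq0.le] using congrArg ((2 * (m : ℂ) - 1) / 2 * ·)
    (stmt7_general m hm (q := q) (by simpa [abs_of_pos hq0] using hq1))
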